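/- arXiv:2509.08387 — 2 statements merged into one kernel-verified Lean document; each statement's English description precedes it below -/
import Mathlib

section
/- Let a budget profile be given (integer m ≥ 1, strictly increasing positive real privacy budgets ε_1 < ε_2 < ⋯ < ε_m, positive integer counts n_1, …, n_m, n = n_1 + ⋯ + n_m, Z = (n − n_m)(n − n_m + 1/4)) with sensitivity I = 1, and let s̃ ≥ 1 be an integer. Then the average of the OBS errors of the 2^{−(k+1)}-scaled profiles over k = 1, …, s̃ satisfies (1/s̃) · Σ_{k=1}^{s̃} errO_1(2^{−(k+1)}) ≤ min( 32(4^{s̃} − 1)/(3 s̃ ε_1²) , Z + 32(4^{s̃} − 1)/(3 s̃ ε_m²) ). (This is the bound on the average noisy-publication error ērr_NOP per time slot in Theorem 2 for Personalized Budget Distribution, where the k-th publication in a window uses the budget profile scaled by 1/2^{k+1}.) -/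
open Finset

/-- Sampling probability p_k(θ) = (e^{ε_k} − 1)/(e^{θ} − 1). -/
noncomputable def samplingP {m : ℕ} (ε : Fin m → ℝ) (k : Fin m) (θ : ℝ) : ℝ :=
  (Real.exp (ε k) - 1) / (Real.exp θ - 1)

/-- Sampling error err_s(θ). -/
noncomputable def errS {m : ℕ} (ε : Fin m → ℝ) (nn : Fin m → ℕ) (θ : ℝ) : ℝ :=
  (∑ k, if ε k < θ then (nn k : ℝ) * samplingP ε k θ * (1 - samplingP ε k θ) else 0)
    + (∑ k, if ε k < θ then (nn k : ℝ) * (1 - samplingP ε k θ) else 0) ^ 2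

/-- Noise error err_dp(θ) = 2I²/θ². -/
noncomputable def errDP (I θ : ℝ) : ℝ := 2 * I ^ 2 / θ ^ 2

/-- Total error err(θ) = err_s(θ) + err_dp(θ). -/
noncomputable def errTot {m : ℕ} (ε : Fin m → ℝ) (nn : Fin m → ℕ) (I θ : ℝ) : ℝ :=
  errS ε nn θ + errDP I θ

/-- OBS error: errO_I = min_{1 ≤ j ≤ m} err(ε_j). -/
noncomputable def errO {m : ℕ} (hm : 0 < m) (ε : Fin m → ℝ) (nn : Fin m → ℕ) (I : ℝ) : ℝ :=
  Finset.univ.inf' (Finset.univ_nonempty_iff.mpr (Fin.pos_iff_nonempty.mp hm))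
    (fun j => errTot ε nn I (ε j))

/-- Index of the smallest budget ε_1. -/
def firstIdx {m : ℕ} (hm : 0 < m) : Fin m := ⟨0, hm⟩

/-- Index of the largest budget ε_m. -/
def lastIdx {m : ℕ} (hm : 0 < m) : Fin m := ⟨m - 1, Nat.sub_lt hm Nat.one_pos⟩

/-- Z = (n − n_m)(n − n_m + 1/4). -/
noncomputable def Zval {m : ℕ} (hm : 0 < m) (nn : Fin m → ℕ) : ℝ :=
  ((∑ j, (nn j : ℝ)) - nn (lastIdx hm)) * ((∑ j, (nn j : ℝ)) - nn (lastIdx hm) + 1 / 4)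

/-- N-th square harmonic number H²_N = Σ_{k=1}^N 1/k². -/
noncomputable def sqHarmonic (N : ℕ) : ℝ := ∑ k ∈ Finset.Icc 1 N, 1 / (k : ℝ) ^ 2

/-- The sampling probability of a nonnegative budget below the threshold lies in the unit interval. -/
lemma samplingP_mem_Icc {m : ℕ} {ε : Fin m → ℝ} {k : Fin m} {θ : ℝ} (h0 : 0 ≤ ε k)
    (h : ε k < θ) : samplingP ε k θ ∈ Set.Icc (0 : ℝ) 1 := by
  have h1 : 1 ≤ Real.exp (ε k) := Real.one_le_exp h0
  have h2 : Real.exp (ε k) < Real.exp θ := Real.exp_lt_exp.mpr h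
  have h3 : 0 < Real.exp θ - 1 := by linarith
  exact ⟨div_nonneg (by linarith) h3.le, (div_le_one h3).mpr (by linarith)⟩

/-- The sampling error vanishes when no budget lies below the threshold. -/
lemma errS_eq_zero {m : ℕ} {ε : Fin m → ℝ} (nn : Fin m → ℕ) {θ : ℝ} (h : ∀ k, θ ≤ ε k) :
    errS ε nn θ = 0 := by
  simp [errS, fun k => not_lt.mpr (h k)]

/-- The sampling error is at most `N (N + 1/4)`, where `N` bounds the number of users whose
budget lies below the threshold. -/
lemma errS_le {m : ℕ} {ε : Fin m → ℝ} (nn : Fin m → ℕ) {θ N : ℝ} (h0 : ∀ k, 0 ≤ ε k)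
    (hN : ∑ k, (if ε k < θ then (nn k : ℝ) else 0) ≤ N) :
    errS ε nn θ ≤ N * (N + 1 / 4) := by
  have hvar : (∑ k, if ε k < θ then (nn k : ℝ) * samplingP ε k θ * (1 - samplingP ε k θ) else 0)
      ≤ N * (1 / 4) := by
    refine le_trans ?_ (mul_le_mul_of_nonneg_right hN (by norm_num))
    rw [Finset.sum_mul]
    refine Finset.sum_le_sum fun k _ => ?_
    split_ifs
    · rw [mul_assoc]
      refine mul_le_mul_of_nonneg_left ?_ (Nat.cast_nonneg _)
      nlinarith [sq_nonneg (samplingP ε k θ - 1 / 2)]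
    · simp
  have hbias : (∑ k, if ε k < θ then (nn k : ℝ) * (1 - samplingP ε k θ) else 0) ≤ N := by
    refine le_trans (Finset.sum_le_sum fun k _ => ?_) hN
    split_ifs with h
    · exact mul_le_of_le_one_right (Nat.cast_nonneg _)
        (by linarith [(samplingP_mem_Icc (h0 k) h).1])
    · exact le_rfl
  have hbias0 : 0 ≤ ∑ k, if ε k < θ then (nn k : ℝ) * (1 - samplingP ε k θ) else 0 := by
    refine Finset.sum_nonneg fun k _ => ?_
    split_ifs with h
    · exact mul_nonneg (Nat.cast_nonneg _) (by linarith [(samplingP_mem_Icc (h0 k) h).2])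
    · exact le_rfl
  have hsq := pow_le_pow_left₀ hbias0 hbias 2
  unfold errS
  linarith

/-- The OBS error is at most the noise error at the smallest budget. -/
lemma errO_le_first {m : ℕ} (hm : 0 < m) {ε : Fin m → ℝ} (nn : Fin m → ℕ) (I : ℝ)
    (hmono : Monotone ε) : errO hm ε nn I ≤ errDP I (ε (firstIdx hm)) := by
  refine (Finset.inf'_le _ (Finset.mem_univ (firstIdx hm))).trans_eq ?_
  rw [errTot, errS_eq_zero nn fun k => hmono (Nat.zero_le k.1 : firstIdx hm ≤ k), zero_add]

/-- The OBS error is at most `Z` plus the noise error at the largest budget. -/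
lemma errO_le_last {m : ℕ} (hm : 0 < m) {ε : Fin m → ℝ} (nn : Fin m → ℕ) (I : ℝ)
    (h0 : ∀ k, 0 ≤ ε k) :
    errO hm ε nn I ≤ Zval hm nn + errDP I (ε (lastIdx hm)) := by
  refine (Finset.inf'_le _ (Finset.mem_univ (lastIdx hm))).trans
    (add_le_add_left (errS_le nn h0 ?_) _)
  rw [← Finset.add_sum_erase _ (fun j => (nn j : ℝ)) (Finset.mem_univ (lastIdx hm)),
    ← Finset.add_sum_erase _ _ (Finset.mem_univ (lastIdx hm)), if_neg (lt_irrefl _), zero_add,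
    add_sub_cancel_left]
  refine Finset.sum_le_sum fun k _ => ?_
  split_ifs
  · exact le_rfl
  · exact Nat.cast_nonneg _

/-- The total noise error over the budgets `x / 2 ^ (k + 1)`, `1 ≤ k ≤ s`. -/
lemma sum_errDP_half_pow (s : ℕ) (x : ℝ) :
    ∑ k ∈ Finset.Icc 1 s, errDP 1 ((1 / 2 : ℝ) ^ (k + 1) * x)
      = 32 * ((4 : ℝ) ^ s - 1) / (3 * x ^ 2) := by
  have hterm (k : ℕ) : errDP 1 ((1 / 2 : ℝ) ^ (k + 1) * x) = 8 * 4 ^ k / x ^ 2 := by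
    have h4 : (4 : ℝ) ^ k = (2 ^ k) ^ 2 := by
      rw [← pow_mul, mul_comm, pow_mul]; norm_num
    rw [errDP, h4, one_div, inv_pow, mul_pow, inv_pow, pow_succ, ← div_div, div_inv_eq_mul]
    ring
  induction s with
  | zero => simp
  | succ s ih =>
    rw [Finset.sum_Icc_succ_top (by omega), ih, hterm, ← div_div, ← div_div, ← add_div]
    ring

/-- Bound on the average noisy-publication error per time slot in Theorem 2 for
Personalized Budget Distribution: the k-th publication uses the profile scaled by
1/2^{k+1}, and the average OBS error is at most
min(32(4^s̃−1)/(3s̃ε_1²), Z + 32(4^s̃−1)/(3s̃ε_m²)). -/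
theorem pbd_avg_obs_publication_error (m : ℕ) (hm : 0 < m) (ε : Fin m → ℝ) (nn : Fin m → ℕ)
    (hpos : ∀ j, 0 < ε j) (hmono : StrictMono ε) (hcount : ∀ j, 0 < nn j)
    (s : ℕ) (hs : 1 ≤ s) :
    (1 / (s : ℝ)) *
        ∑ k ∈ Finset.Icc 1 s, errO hm (fun j => (1 / 2 : ℝ) ^ (k + 1) * ε j) nn 1 ≤
      min (32 * ((4 : ℝ) ^ s - 1) / (3 * (s : ℝ) * (ε (firstIdx hm)) ^ 2))
        (Zval hm nn + 32 * ((4 : ℝ) ^ s - 1) / (3 * (s : ℝ) * (ε (lastIdx hm)) ^ 2)) := by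
  have hs0 : (0 : ℝ) < s := by exact_mod_cast hs
  have hdiv (x : ℝ) : 32 * ((4 : ℝ) ^ s - 1) / (3 * (s : ℝ) * x ^ 2)
      = (1 / (s : ℝ)) * ∑ k ∈ Finset.Icc 1 s, errDP 1 ((1 / 2 : ℝ) ^ (k + 1) * x) := by
    rw [sum_errDP_half_pow, div_mul_div_comm, one_mul]
    ring
  have hscale (k : ℕ) : (0 : ℝ) ≤ (1 / 2) ^ (k + 1) := by positivity
  refine le_min ?_ ?_
  · rw [hdiv]
    refine mul_le_mul_of_nonneg_left (Finset.sum_le_sum fun k _ => ?_) (by positivity)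
    exact errO_le_first hm nn 1 (hmono.monotone.const_mul (hscale k))
  · have hZ : Zval hm nn = (1 / (s : ℝ)) * ∑ _k ∈ Finset.Icc 1 s, Zval hm nn := by
      simp [hs0.ne']
    rw [hdiv, hZ, ← mul_add, ← Finset.sum_add_distrib]
    refine mul_le_mul_of_nonneg_left (Finset.sum_le_sum fun k _ => ?_) (by positivity)
    exact errO_le_last hm nn 1 fun j => mul_nonneg (hscale k) (hpos j).le
end

section
/- Let a budget profile be given (integer m ≥ 1, strictly increasing positive real privacy budgets ε_1 < ε_2 < ⋯ < ε_m, positive integer counts n_1, …, n_m, n = n_1 + ⋯ + n_m, Z = (n − n_m)(n − n_m + 1/4)) with sensitivity I = 1, and let N ≥ 1 be an integer. Then Σ_{k=1}^{N} errO_1(k) ≤ min( (2/ε_1²)·H²_N , N·Z + (2/ε_m²)·H²_N ), where errO_1(k) is the OBS error of the k-scaled profile and H²_N = Σ_{k=1}^{N} 1/k². (This is the bound err^{(s,p)}_NOP on the total error of the α skipped publications together with the publication, with N = α + 1, in the proof of Theorem 3 case α ≤ w_L for Personalized Budget Absorption.) -/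
open Finset

/-- The OBS error is at most the total error at any one of the budgets. -/
theorem errO_le_errTot {m : ℕ} (hm : 0 < m) (ε : Fin m → ℝ) (nn : Fin m → ℕ) (I : ℝ)
    (j : Fin m) : errO hm ε nn I ≤ errTot ε nn I (ε j) :=
  Finset.inf'_le _ (Finset.mem_univ j)

/-- At the smallest budget nobody is subsampled, so the sampling error vanishes. -/
theorem errS_firstIdx {m : ℕ} (hm : 0 < m) {ε : Fin m → ℝ} (nn : Fin m → ℕ)
    (hmono : StrictMono ε) : errS ε nn (ε (firstIdx hm)) = 0 := by
  have h : ∀ k, ¬ ε k < ε (firstIdx hm) := fun k =>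
    not_lt.mpr (hmono.monotone (Nat.zero_le k.val : firstIdx hm ≤ k))
  simp [errS, h]

theorem lt_lastIdx_iff {m : ℕ} (hm : 0 < m) {ε : Fin m → ℝ} (hmono : StrictMono ε)
    (k : Fin m) : ε k < ε (lastIdx hm) ↔ k ≠ lastIdx hm := by
  rw [hmono.lt_iff_lt, Fin.lt_def, Ne, Fin.ext_iff]
  simp only [lastIdx]
  omega

/-- At the largest budget the sampling error is at most `Z`. -/
theorem errS_lastIdx_le {m : ℕ} (hm : 0 < m) {ε : Fin m → ℝ} (nn : Fin m → ℕ)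
    (hpos : ∀ j, 0 < ε j) (hmono : StrictMono ε) :
    errS ε nn (ε (lastIdx hm)) ≤ Zval hm nn := by
  have hsum : (∑ k, if ε k < ε (lastIdx hm) then (nn k : ℝ) else 0) =
      (∑ j, (nn j : ℝ)) - nn (lastIdx hm) := by
    simp only [lt_lastIdx_iff hm hmono, ← Finset.sum_filter, Finset.filter_ne']
    rw [← Finset.sum_erase_add _ _ (Finset.mem_univ (lastIdx hm)), add_sub_cancel_right]
  have hp : ∀ k, ε k < ε (lastIdx hm) →
      0 ≤ samplingP ε k (ε (lastIdx hm)) ∧ samplingP ε k (ε (lastIdx hm)) ≤ 1 := by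
    intro k hk
    have hk0 : 0 < Real.exp (ε k) - 1 := sub_pos.mpr (Real.one_lt_exp_iff.mpr (hpos k))
    have hl0 : 0 < Real.exp (ε (lastIdx hm)) - 1 :=
      sub_pos.mpr (Real.one_lt_exp_iff.mpr (hpos _))
    have hle := Real.exp_le_exp.mpr hk.le
    exact ⟨(div_pos hk0 hl0).le, (div_le_one hl0).mpr (by linarith)⟩
  have hvar : (∑ k, if ε k < ε (lastIdx hm) then (nn k : ℝ) *
        samplingP ε k (ε (lastIdx hm)) * (1 - samplingP ε k (ε (lastIdx hm))) else 0) ≤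
      ((∑ j, (nn j : ℝ)) - nn (lastIdx hm)) * (1 / 4) := by
    rw [← hsum, Finset.sum_mul]
    refine Finset.sum_le_sum fun k _ => ?_
    split_ifs
    · rw [mul_assoc]
      refine mul_le_mul_of_nonneg_left ?_ (Nat.cast_nonneg _)
      nlinarith [sq_nonneg (samplingP ε k (ε (lastIdx hm)) - 1 / 2)]
    · simp
  have hbias : (∑ k, if ε k < ε (lastIdx hm) then (nn k : ℝ) *
        (1 - samplingP ε k (ε (lastIdx hm))) else 0) ≤
      (∑ j, (nn j : ℝ)) - nn (lastIdx hm) := by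
    rw [← hsum]
    refine Finset.sum_le_sum fun k _ => ?_
    split_ifs with hk
    · exact mul_le_of_le_one_right (Nat.cast_nonneg _) (by linarith [(hp k hk).1])
    · exact le_rfl
  have hbias0 : 0 ≤ ∑ k, if ε k < ε (lastIdx hm) then (nn k : ℝ) *
        (1 - samplingP ε k (ε (lastIdx hm))) else 0 := by
    refine Finset.sum_nonneg fun k _ => ?_
    split_ifs with hk
    · exact mul_nonneg (Nat.cast_nonneg _) (by linarith [(hp k hk).2])
    · exact le_rfl
  have hsq := pow_le_pow_left₀ hbias0 hbias 2
  unfold errS Zval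
  linarith

/-- Scaling a budget by `c` divides the noise error by `c ^ 2`. -/
theorem errDP_one_mul (c θ : ℝ) : errDP 1 (c * θ) = 2 / θ ^ 2 * (1 / c ^ 2) := by
  rw [errDP, mul_pow, one_pow, mul_one, div_mul_div_comm, mul_one, mul_comm (c ^ 2)]

/-- Bound on the total error of the α skipped publications together with the
publication (N = α + 1) in the proof of Theorem 3, case α ≤ w_L, for Personalized
Budget Absorption. -/
theorem pba_skipped_obs_error_bound (m : ℕ) (hm : 0 < m) (ε : Fin m → ℝ) (nn : Fin m → ℕ)
    (hpos : ∀ j, 0 < ε j) (hmono : StrictMono ε) (hcount : ∀ j, 0 < nn j)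
    (N : ℕ) (hN : 1 ≤ N) :
    ∑ k ∈ Finset.Icc 1 N, errO hm (fun j => (k : ℝ) * ε j) nn 1 ≤
      min ((2 / (ε (firstIdx hm)) ^ 2) * sqHarmonic N)
        ((N : ℝ) * Zval hm nn + (2 / (ε (lastIdx hm)) ^ 2) * sqHarmonic N) := by
  have hscale : ∀ k ∈ Finset.Icc 1 N, (0 : ℝ) < k := fun k hk =>
    Nat.cast_pos.mpr (Finset.mem_Icc.mp hk).1
  have hmono' : ∀ k ∈ Finset.Icc 1 N, StrictMono fun j => (k : ℝ) * ε j := fun k hk =>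
    hmono.const_mul (hscale k hk)
  refine le_min ?_ ?_
  · rw [sqHarmonic, Finset.mul_sum]
    refine Finset.sum_le_sum fun k hk => (errO_le_errTot hm _ nn 1 (firstIdx hm)).trans ?_
    rw [errTot, errS_firstIdx hm nn (hmono' k hk), errDP_one_mul, zero_add]
  · have hN' : (N : ℝ) * Zval hm nn = ∑ _k ∈ Finset.Icc 1 N, Zval hm nn := by simp
    rw [sqHarmonic, Finset.mul_sum, hN', ← Finset.sum_add_distrib]
    refine Finset.sum_le_sum fun k hk => (errO_le_errTot hm _ nn 1 (lastIdx hm)).trans ?_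
    rw [errTot, errDP_one_mul]
    gcongr
    exact errS_lastIdx_le hm nn (fun j => mul_pos (hscale k hk) (hpos j)) (hmono' k hk)
end
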